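/- There exists an absolute constant C > 0 such that for every real Banach space X, every compact set K ⊂ X, every γ ∈ (0,1], and every sequence produced by the weak greedy algorithm with parameter γ, the error satisfies σ_n(K) ≤ C γ^{−1} n · ε_n(co(K)) for all n ≥ 1. -/

import Mathlib

open scoped RealInnerProductSpace

/-- Dyadic entropy number: infimum of all `ε > 0` such that `K` is covered by `2^n`
balls of radius `ε`. -/
noncomputable def entropyNumber {X : Type*} [NormedAddCommGroup X] (n : ℕ) (K : Set X) : ℝ :=
  sInf {ε : ℝ | 0 < ε ∧ ∃ c : Fin (2 ^ n) → X, K ⊆ ⋃ i, Metric.closedBall (c i) ε}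

/-- Symmetric (absolutely) convex hull: closure of the set of finite sums `∑ cᵢ gᵢ`
with `gᵢ ∈ K` and `∑ |cᵢ| ≤ 1`. -/
noncomputable def symConvexHull {X : Type*} [NormedAddCommGroup X] [NormedSpace ℝ X]
    (K : Set X) : Set X :=
  closure {x : X | ∃ (m : ℕ) (c : Fin m → ℝ) (g : Fin m → X),
    (∀ i, g i ∈ K) ∧ (∑ i, |c i|) ≤ 1 ∧ x = ∑ i, c i • g i}

/-- Volume of the unit Euclidean ball in `ℝⁿ`. -/
noncomputable def unitBallVol (n : ℕ) : ℝ :=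
  Real.pi ^ ((n : ℝ) / 2) / Real.Gamma ((n : ℝ) / 2 + 1)

/-- Span of the first `n` terms of a sequence. -/
noncomputable def spanFirst {X : Type*} [NormedAddCommGroup X] [NormedSpace ℝ X]
    (f : ℕ → X) (n : ℕ) : Submodule ℝ X :=
  Submodule.span ℝ (f '' {i | i < n})

/-- The weak greedy algorithm with parameter `γ`: `f n` (the `(n+1)`-st iterate) lies in `K`
and its distance to the span of the previous iterates is at least `γ` times that of any
other element of `K`. -/
def IsWeakGreedy {X : Type*} [NormedAddCommGroup X] [NormedSpace ℝ X]
    (γ : ℝ) (K : Set X) (f : ℕ → X) : Prop :=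
  ∀ n : ℕ, f n ∈ K ∧ ∀ g ∈ K,
    γ * Metric.infDist g (spanFirst f n : Set X) ≤ Metric.infDist (f n) (spanFirst f n : Set X)

/-- The greedy error `σ_n(K) = sup_{f ∈ K} dist(f, span{f_1,…,f_n})`. -/
noncomputable def greedyError {X : Type*} [NormedAddCommGroup X] [NormedSpace ℝ X]
    (K : Set X) (f : ℕ → X) (n : ℕ) : ℝ :=
  sSup ((fun g => Metric.infDist g (spanFirst f n : Set X)) '' K)

/-- Kolmogorov `n`-width. -/
noncomputable def kolmogorovWidth {X : Type*} [NormedAddCommGroup X] [NormedSpace ℝ X]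
    (n : ℕ) (K : Set X) : ℝ :=
  sInf {d : ℝ | ∃ Y : Submodule ℝ X, FiniteDimensional ℝ Y ∧ Module.finrank ℝ Y ≤ n ∧
    d = sSup ((fun g => Metric.infDist g (Y : Set X)) '' K)}

/-- `f` admits an `ℓ¹` representation over the dictionary `D`. -/
def HasL1Rep {X : Type*} [NormedAddCommGroup X] [NormedSpace ℝ X] (D : Set X) (f : X) : Prop :=
  ∃ (c : ℕ → ℝ) (g : ℕ → X), (∀ i, g i ∈ D) ∧ Summable (fun i => |c i|) ∧
    HasSum (fun i => c i • g i) f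

/-- The variation norm `‖f‖_{L₁(D)}`. -/
noncomputable def varNorm {X : Type*} [NormedAddCommGroup X] [NormedSpace ℝ X]
    (D : Set X) (f : X) : ℝ :=
  sInf {t : ℝ | ∃ (c : ℕ → ℝ) (g : ℕ → X), (∀ i, g i ∈ D) ∧ Summable (fun i => |c i|) ∧
    HasSum (fun i => c i • g i) f ∧ t = ∑' i, |c i|}

/-- The orthogonal greedy algorithm with target `f`: `fa 0 = 0`; at each step `g n ∈ D`
maximizes `|⟨g, f - fa n⟩|` over `D`, and `fa (n+1)` is the orthogonal projection of `f`
onto `span{g 0, …, g n}`. -/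
def IsOGA {X : Type*} [NormedAddCommGroup X] [InnerProductSpace ℝ X]
    (D : Set X) (f : X) (g fa : ℕ → X) : Prop :=
  fa 0 = 0 ∧ ∀ n : ℕ,
    g n ∈ D ∧ (∀ h ∈ D, |⟪h, f - fa n⟫| ≤ |⟪g n, f - fa n⟫|) ∧
    fa (n + 1) ∈ Submodule.span ℝ (g '' {i | i ≤ n}) ∧
    ∀ w ∈ Submodule.span ℝ (g '' {i | i ≤ n}), ⟪f - fa (n + 1), w⟫ = 0

/-- Best `n`-term approximation error `E_n(f, D)`. -/
noncomputable def bestNTermError {X : Type*} [NormedAddCommGroup X] [NormedSpace ℝ X]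
    (D : Set X) (n : ℕ) (f : X) : ℝ :=
  sInf {r : ℝ | ∃ (c : Fin n → ℝ) (g : Fin n → X), (∀ i, g i ∈ D) ∧ r = ‖f - ∑ i, c i • g i‖}

/-- The K-functional `K(t, g)` between `X` and `L₁(D)`. -/
noncomputable def Kfunctional {X : Type*} [NormedAddCommGroup X] [NormedSpace ℝ X]
    (D : Set X) (t : ℝ) (gg : X) : ℝ :=
  sInf {s : ℝ | ∃ h : X, HasL1Rep D h ∧ s = ‖gg - h‖ + t * varNorm D h}

/-- The interpolation norm `‖g‖_θ = sup_{t > 0} t^{-θ} K(t, g)`. -/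
noncomputable def interpNorm {X : Type*} [NormedAddCommGroup X] [NormedSpace ℝ X]
    (D : Set X) (θ : ℝ) (gg : X) : ℝ :=
  sSup ((fun t => t ^ (-θ) * Kfunctional D t gg) '' Set.Ioi (0 : ℝ))

open MeasureTheory

/-- A norming functional for the distance to a subspace. -/
theorem exists_norm_le_one_vanishing_eq_infDist {X : Type*} [NormedAddCommGroup X]
    [NormedSpace ℝ X] (Y : Submodule ℝ X) [hY : IsClosed (Y : Set X)] (x : X) :
    ∃ ℓ : X →L[ℝ] ℝ, ‖ℓ‖ ≤ 1 ∧ (∀ y ∈ Y, ℓ y = 0) ∧ ℓ x = Metric.infDist x (Y : Set X) := by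
  obtain ⟨g, hg, hgx⟩ := exists_dual_vector'' ℝ (Y.mkQL x)
  refine ⟨g.comp Y.mkQL, ContinuousLinearMap.opNorm_le_bound _ zero_le_one fun z => ?_,
    fun y hy => ?_, ?_⟩
  · calc ‖g (Y.mkQL z)‖ ≤ ‖g‖ * ‖Y.mkQL z‖ := g.le_opNorm _
      _ ≤ 1 * ‖z‖ := by
        gcongr
        exact Submodule.Quotient.norm_mk_le Y z
  · have : Y.mkQL y = 0 := (Submodule.Quotient.mk_eq_zero Y).2 hy
    simp [this]
  · exact hgx.trans (QuotientAddGroup.norm_mk (S := Y.toAddSubgroup) x)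

theorem isClosed_spanFirst {X : Type*} [NormedAddCommGroup X] [NormedSpace ℝ X]
    (f : ℕ → X) (n : ℕ) : IsClosed (spanFirst f n : Set X) := by
  have : FiniteDimensional ℝ (spanFirst f n) :=
    FiniteDimensional.span_of_finite ℝ ((Set.finite_lt_nat n).image f)
  exact (spanFirst f n).closed_of_finiteDimensional

theorem spanFirst_mono {X : Type*} [NormedAddCommGroup X] [NormedSpace ℝ X]
    (f : ℕ → X) : Monotone (spanFirst f) := fun _ _ h =>
  Submodule.span_mono (Set.image_mono fun _ hi => lt_of_lt_of_le hi h)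

theorem mem_spanFirst {X : Type*} [NormedAddCommGroup X] [NormedSpace ℝ X]
    (f : ℕ → X) {i n : ℕ} (h : i < n) : f i ∈ spanFirst f n :=
  Submodule.subset_span ⟨i, h, rfl⟩

/-- A bound on the determinant of a matrix whose image of a cube is covered by cubes. -/
theorem abs_det_mul_pow_le_of_image_subset {ι κ : Type*} [Fintype ι] [DecidableEq ι] [Fintype κ]
    (M : Matrix ι ι ℝ) {r ε : ℝ} (hr : 0 ≤ r) (hε : 0 ≤ ε) (c : κ → ι → ℝ)
    (h : (Matrix.toLin' M) '' Metric.closedBall 0 r ⊆ ⋃ i, Metric.closedBall (c i) ε) :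
    |M.det| * (2 * r) ^ Fintype.card ι ≤ Fintype.card κ * (2 * ε) ^ Fintype.card ι := by
  have hvol : volume ((Matrix.toLin' M) '' Metric.closedBall 0 r)
      ≤ ∑ i, volume (Metric.closedBall (c i) ε) :=
    (measure_mono h).trans (measure_iUnion_fintype_le _ _)
  rw [Measure.addHaar_image_linearMap, LinearMap.det_toLin', Real.volume_pi_closedBall _ hr]
    at hvol
  simp only [Real.volume_pi_closedBall _ hε, Finset.sum_const, Finset.card_univ,
    nsmul_eq_mul] at hvol
  rw [← ENNReal.ofReal_natCast, ← ENNReal.ofReal_mul (abs_nonneg _),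
    ← ENNReal.ofReal_mul (Nat.cast_nonneg _)] at hvol
  exact (ENNReal.ofReal_le_ofReal_iff (by positivity)).1 hvol

/-- Elements of a set that are `δ`-separated from the span of their predecessors force every
covering of the symmetric convex hull by `2 ^ n` balls to have radius at least `δ / (2 n)`. -/
theorem le_two_mul_of_symConvexHull_subset {X : Type*} [NormedAddCommGroup X] [NormedSpace ℝ X]
    {K : Set X} {f : ℕ → X} {n : ℕ} (hn : 1 ≤ n) (hfK : ∀ i, f i ∈ K) {δ : ℝ} (hδ : 0 ≤ δ)
    (hf : ∀ k < n, δ ≤ Metric.infDist (f k) (spanFirst f k : Set X))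
    {ε : ℝ} (hε : 0 < ε) (c : Fin (2 ^ n) → X)
    (hc : symConvexHull K ⊆ ⋃ i, Metric.closedBall (c i) ε) : δ ≤ 2 * n * ε := by
  have hex : ∀ k : Fin n, ∃ ℓ : X →L[ℝ] ℝ, ‖ℓ‖ ≤ 1 ∧ (∀ y ∈ spanFirst f k, ℓ y = 0) ∧
      ℓ (f k) = Metric.infDist (f k) (spanFirst f k : Set X) := fun k =>
    have := isClosed_spanFirst f k
    exists_norm_le_one_vanishing_eq_infDist _ _
  choose ℓ hℓ hℓ0 hℓf using hex
  have hn0 : (0 : ℝ) < n := by exact_mod_cast hn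
  set M : Matrix (Fin n) (Fin n) ℝ := Matrix.of fun k j => ℓ k (f j) with hM
  have hdet : δ ^ n ≤ |M.det| := by
    have hupper : M.IsUpperTriangular := fun i j hij => hℓ0 i _ (mem_spanFirst f hij)
    rw [Matrix.det_of_isUpperTriangular hupper]
    refine le_trans ?_ (le_abs_self _)
    calc δ ^ n = ∏ _k : Fin n, δ := by simp
      _ ≤ ∏ k, M k k := Finset.prod_le_prod (fun _ _ => hδ) fun k _ =>
        (hf k k.2).trans (hℓf k).ge
  have hcover : (Matrix.toLin' M) '' Metric.closedBall 0 (1 / n : ℝ)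
      ⊆ ⋃ i, Metric.closedBall (fun k => ℓ k (c i)) ε := by
    rintro _ ⟨a, ha, rfl⟩
    rw [mem_closedBall_zero_iff] at ha
    have hmem : ∑ j, a j • f j ∈ symConvexHull K := by
      refine subset_closure ⟨n, a, fun j => f j, fun j => hfK j, ?_, rfl⟩
      calc ∑ j, |a j| ≤ ∑ _j : Fin n, (1 / n : ℝ) :=
            Finset.sum_le_sum fun j _ => (norm_le_pi_norm a j).trans ha
        _ = 1 := by simp [hn0.ne']
    obtain ⟨i, hi⟩ := Set.mem_iUnion.1 (hc hmem)
    refine Set.mem_iUnion.2 ⟨i, (dist_pi_le_iff hε.le).2 fun k => ?_⟩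
    have hMa : M.toLin' a k = ℓ k (∑ j, a j • f j) := by
      simp [hM, Matrix.mulVec, dotProduct, mul_comm]
    rw [hMa, dist_eq_norm, ← map_sub]
    calc ‖ℓ k (∑ j, a j • f j - c i)‖ ≤ 1 * ‖∑ j, a j • f j - c i‖ :=
          (ℓ k).le_of_opNorm_le (hℓ k) _
      _ ≤ ε := by rwa [one_mul, ← dist_eq_norm]
  have hmain := abs_det_mul_pow_le_of_image_subset M (by positivity) hε.le _ hcover
  simp only [Fintype.card_fin] at hmain
  have hpow : (δ * (2 * (1 / n))) ^ n ≤ (2 * (2 * ε)) ^ n := by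
    rw [mul_pow, mul_pow 2 (2 * ε)]
    push_cast at hmain
    exact (mul_le_mul_of_nonneg_right hdet (by positivity)).trans hmain
  have hle := (pow_le_pow_iff_left₀ (by positivity) (by positivity) (by lia)).1 hpow
  have : δ * (2 * (1 / n)) * (n / 2) ≤ 2 * (2 * ε) * (n / 2) := by gcongr
  field_simp at this
  linarith

theorem symConvexHull_subset_closedBall {X : Type*} [NormedAddCommGroup X] [NormedSpace ℝ X]
    {K : Set X} {R : ℝ} (hR : 0 ≤ R) (hK : K ⊆ Metric.closedBall 0 R) :
    symConvexHull K ⊆ Metric.closedBall 0 R := by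
  refine closure_minimal ?_ Metric.isClosed_closedBall
  rintro _ ⟨m, c, g, hg, hc, rfl⟩
  rw [mem_closedBall_zero_iff]
  calc ‖∑ i, c i • g i‖ ≤ ∑ i, |c i| * R := norm_sum_le_of_le _ fun i _ => by
        rw [norm_smul, Real.norm_eq_abs]
        gcongr
        exact mem_closedBall_zero_iff.1 (hK (hg i))
    _ = (∑ i, |c i|) * R := (Finset.sum_mul ..).symm
    _ ≤ R := mul_le_of_le_one_left hR hc

/-- A lower bound for the radii of all coverings bounds the entropy number of a bounded set. -/
theorem le_entropyNumber {X : Type*} [NormedAddCommGroup X] {K : Set X}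
    (hK : Bornology.IsBounded K) {n : ℕ} {b : ℝ}
    (h : ∀ ε > 0, ∀ c : Fin (2 ^ n) → X, K ⊆ ⋃ i, Metric.closedBall (c i) ε → b ≤ ε) :
    b ≤ entropyNumber n K := by
  obtain ⟨R, hR, hKR⟩ := hK.subset_closedBall_lt 0 0
  refine le_csInf ⟨R, hR, fun _ => 0, fun x hx => ?_⟩ fun ε ⟨hε, c, hc⟩ => h ε hε c hc
  exact Set.mem_iUnion.2 ⟨⟨0, by positivity⟩, hKR hx⟩

/-- there is an absolute constant `C` with
`σ_n(K) ≤ C γ⁻¹ n ε_n(co(K))` for the weak greedy algorithm in any Banach space. -/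
theorem weakGreedy_error_le_linear_entropy_banach :
    ∃ C : ℝ, 0 < C ∧
      ∀ (X : Type) (_ : NormedAddCommGroup X) (_ : NormedSpace ℝ X) (_ : CompleteSpace X)
        (K : Set X), IsCompact K →
        ∀ γ : ℝ, γ ∈ Set.Ioc (0 : ℝ) 1 →
        ∀ f : ℕ → X, IsWeakGreedy γ K f →
        ∀ n : ℕ, 1 ≤ n →
          greedyError K f n
            ≤ C * γ⁻¹ * (n : ℝ) * entropyNumber n (symConvexHull K) := by
  refine ⟨2, two_pos, fun X _ _ _ K hK γ hγ f hf n hn => ?_⟩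
  have hγ0 : 0 < γ := hγ.1
  have hn0 : (0 : ℝ) < n := by exact_mod_cast hn
  obtain ⟨R, hR, hKR⟩ := hK.isBounded.subset_closedBall_lt 0 0
  have hbdd : Bornology.IsBounded (symConvexHull K) :=
    Metric.isBounded_closedBall.subset (symConvexHull_subset_closedBall hR.le hKR)
  refine csSup_le ⟨_, f 0, (hf 0).1, rfl⟩ ?_
  rintro _ ⟨g, hg, rfl⟩
  have hkey : γ * Metric.infDist g (spanFirst f n : Set X) / (2 * n)
      ≤ entropyNumber n (symConvexHull K) := by
    refine le_entropyNumber hbdd fun ε hε c hc => ?_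
    rw [div_le_iff₀' (by positivity)]
    refine le_two_mul_of_symConvexHull_subset hn (fun i => (hf i).1)
      (mul_nonneg hγ0.le Metric.infDist_nonneg) (fun k hk => ?_) hε c hc
    refine le_trans ?_ ((hf k).2 g hg)
    gcongr
    exact Metric.infDist_le_infDist_of_subset (spanFirst_mono f hk.le) ⟨0, zero_mem _⟩
  rw [div_le_iff₀' (by positivity)] at hkey
  calc Metric.infDist g (spanFirst f n : Set X)
      = γ⁻¹ * (γ * Metric.infDist g (spanFirst f n : Set X)) := by field_simp
    _ ≤ γ⁻¹ * (2 * n * entropyNumber n (symConvexHull K)) := by gcongr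
    _ = 2 * γ⁻¹ * n * entropyNumber n (symConvexHull K) := by ring
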